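/- arXiv:1104.4360 — 7 statements merged into one kernel-verified Lean document; each statement's English description precedes it below -/
import Mathlib

section
/- Let X be a real random variable with density p, and let ψ be a probability density on ℝ such that ψ(x) = 0 implies p(x) = 0 for almost every x, and such that E[max(log(1/ψ(X)), 0)] < +∞. Then the entropy h(X) = -∫ p(x) log p(x) dx is well-defined as an extended real number in [-∞, +∞) (i.e., the positive part of p log p is integrable), and h(X) ≤ E[log(1/ψ(X))]. -/
open MeasureTheory

/-- The extended-real-valued integral `∫ f dμ`, defined as the difference of the
lintegrals of the positive and negative parts of `f`. -/
noncomputable def eInt {α : Type*} [MeasurableSpace α] (μ : Measure α) (f : α → ℝ) : EReal :=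
  ((∫⁻ x, ENNReal.ofReal (f x) ∂μ) : EReal) - ((∫⁻ x, ENNReal.ofReal (-(f x)) ∂μ) : EReal)

theorem aux_sub (a b c d : ENNReal) (ha : a ≠ ⊤) (hc : c ≠ ⊤) (h : a + d ≤ b + c) :
    (a : EReal) - (b : EReal) ≤ (c : EReal) - (d : EReal) := by
  by_cases hb : b = ⊤
  · subst hb
    lift a to NNReal using ha
    have : ((a : ENNReal) : EReal) - ((⊤ : ENNReal) : EReal) = ⊥ := by
      rw [EReal.coe_ennreal_top, sub_eq_add_neg, EReal.neg_top, EReal.add_bot]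
    rw [this]
    exact bot_le
  · have hd : d ≠ ⊤ := by
      rintro rfl
      rw [add_top, top_le_iff] at h
      exact ENNReal.add_ne_top.2 ⟨hb, hc⟩ h
    lift a to NNReal using ha
    lift b to NNReal using hb
    lift c to NNReal using hc
    lift d to NNReal using hd
    have h1 : a + d ≤ b + c := by exact_mod_cast h
    have h2 : (a : ℝ) + d ≤ b + c := by exact_mod_cast h1
    have h3 : (a : ℝ) - b ≤ c - d := by linarith
    have h4 : (((a : ℝ) - b : ℝ) : EReal) ≤ ((c - d : ℝ) : EReal) := EReal.coe_le_coe_iff.2 h3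
    rw [EReal.coe_sub, EReal.coe_sub] at h4
    exact h4

theorem aux_pt (p s : ℝ) (hp : 0 ≤ p) (hs : 0 ≤ s) (h : s = 0 → p = 0) :
    -(p * Real.log p) + p ≤ p * Real.log (1 / s) + s := by
  rcases hp.eq_or_lt with rfl | hp
  · simpa using hs
  have hs' : 0 < s := lt_of_le_of_ne hs (fun e => hp.ne' (h e.symm))
  have h1 := Real.log_le_sub_one_of_pos (div_pos hs' hp)
  rw [Real.log_div hs'.ne' hp.ne'] at h1
  have h2 := mul_le_mul_of_nonneg_left h1 hp.le
  have h3 : p * (s / p - 1) = s - p := by field_simp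
  rw [one_div, Real.log_inv]
  nlinarith

theorem aux_enn (f g p s : ℝ) (hp : 0 ≤ p) (hs : 0 ≤ s) (h : f + p ≤ g + s) :
    ENNReal.ofReal f + ENNReal.ofReal (-g) + ENNReal.ofReal p
      ≤ ENNReal.ofReal (-f) + ENNReal.ofReal g + ENNReal.ofReal s := by
  have e : ∀ x : ℝ, ENNReal.ofReal x = ENNReal.ofReal (max x 0) := by
    intro x
    rcases le_total x 0 with hx | hx
    · rw [max_eq_right hx, ENNReal.ofReal_of_nonpos hx, ENNReal.ofReal_zero]
    · rw [max_eq_left hx]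
  rw [e f, e (-f), e g, e (-g), ← ENNReal.ofReal_add (by positivity) (by positivity),
    ← ENNReal.ofReal_add (by positivity) (by positivity),
    ← ENNReal.ofReal_add (by positivity) (by positivity),
    ← ENNReal.ofReal_add (by positivity) (by positivity)]
  apply ENNReal.ofReal_le_ofReal
  have hf := max_zero_sub_max_neg_zero_eq_self f
  have hg := max_zero_sub_max_neg_zero_eq_self g
  linarith

/-- **Proposition 2.1.** If `X` has density `p`, `ψ` is a probability density on `ℝ` with
`ψ(x) = 0 ⟹ p(x) = 0` a.e. and `E log⁺(1/ψ(X)) < ∞`, then the entropy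
`h(X) = -∫ p log p` is well defined in `[-∞, +∞)` (the positive part of `-p log p`,
i.e. the negative part of `p log p`, is integrable), and `h(X) ≤ E log(1/ψ(X))`. -/
theorem stmt_0
    {Ω : Type*} [MeasurableSpace Ω] (P : Measure Ω) [IsProbabilityMeasure P]
    (X : Ω → ℝ) (hX : Measurable X)
    (p ψ : ℝ → ℝ) (hpm : Measurable p) (hpnn : ∀ x, 0 ≤ p x)
    (hpd : Measure.map X P = volume.withDensity (fun x => ENNReal.ofReal (p x)))
    (hψm : Measurable ψ) (hψnn : ∀ x, 0 ≤ ψ x)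
    (hψ1 : ∫⁻ x, ENNReal.ofReal (ψ x) = 1)
    (hzero : ∀ᵐ x ∂(volume : Measure ℝ), ψ x = 0 → p x = 0)
    (hlog : Integrable (fun ω => max (Real.log (1 / ψ (X ω))) 0) P) :
    Integrable (fun x => max (-(p x * Real.log (p x))) 0) volume ∧
      eInt volume (fun x => -(p x * Real.log (p x)))
        ≤ eInt P (fun ω => Real.log (1 / ψ (X ω))) := by
  have hφm : Measurable (fun x => Real.log (1 / ψ x)) :=
    Real.measurable_log.comp (measurable_const.div hψm)
  have hfm : Measurable (fun x => -(p x * Real.log (p x))) :=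
    (hpm.mul (Real.measurable_log.comp hpm)).neg
  have hgm : Measurable (fun x => p x * Real.log (1 / ψ x)) := hpm.mul hφm
  have hp1 : ∫⁻ x, ENNReal.ofReal (p x) = 1 := by
    have h := congrArg (fun m => m Set.univ) hpd
    simp only [Measure.map_apply hX MeasurableSet.univ, Set.preimage_univ, measure_univ,
      withDensity_apply _ MeasurableSet.univ, Measure.restrict_univ] at h
    exact h.symm
  have htr : ∀ φ : ℝ → ℝ, Measurable φ →
      ∫⁻ ω, ENNReal.ofReal (φ (X ω)) ∂P = ∫⁻ x, ENNReal.ofReal (p x * φ x) := by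
    intro φ hφ
    rw [← lintegral_map (f := fun x => ENNReal.ofReal (φ x)) hφ.ennreal_ofReal hX, hpd,
      lintegral_withDensity_eq_lintegral_mul _ hpm.ennreal_ofReal hφ.ennreal_ofReal]
    refine lintegral_congr fun x => ?_
    simp only [Pi.mul_apply]
    rw [ENNReal.ofReal_mul (hpnn x)]
  have hG1 := htr _ hφm
  have hG2 := htr _ hφm.neg
  have hGfin : ∫⁻ x, ENNReal.ofReal (p x * Real.log (1 / ψ x)) ≠ ⊤ := by
    rw [← hG1]
    have h := hlog.lintegral_lt_top
    refine (lt_of_le_of_lt (lintegral_mono fun ω => ?_) h).ne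
    exact ENNReal.ofReal_le_ofReal (le_max_left _ _)
  have hFfin : ∫⁻ x, ENNReal.ofReal (-(p x * Real.log (p x))) ≠ ⊤ := by
    have h : ∫⁻ x, ENNReal.ofReal (-(p x * Real.log (p x))) ≤
        ∫⁻ x, (ENNReal.ofReal (p x * Real.log (1 / ψ x)) + ENNReal.ofReal (ψ x)) := by
      refine lintegral_mono_ae ?_
      filter_upwards [hzero] with x hx
      refine le_trans (ENNReal.ofReal_le_ofReal ?_) ENNReal.ofReal_add_le
      have := aux_pt (p x) (ψ x) (hpnn x) (hψnn x) hx
      linarith [hpnn x]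
    rw [lintegral_add_left hgm.ennreal_ofReal, hψ1] at h
    exact ne_top_of_le_ne_top (ENNReal.add_ne_top.2 ⟨hGfin, ENNReal.one_ne_top⟩) h
  refine ⟨⟨(hfm.max measurable_const).aestronglyMeasurable, ?_⟩, ?_⟩
  · have hnn : 0 ≤ᵐ[volume] fun x => max (-(p x * Real.log (p x))) 0 :=
      Filter.Eventually.of_forall fun x => le_max_right _ _
    rw [hasFiniteIntegral_iff_ofReal hnn]
    refine lt_of_le_of_lt (lintegral_mono fun x => ?_) (lt_top_iff_ne_top.2 hFfin)
    rcases le_total (-(p x * Real.log (p x))) 0 with hx | hx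
    · simp only [max_eq_right hx, ENNReal.ofReal_zero, zero_le]
    · simp only [max_eq_left hx, le_refl]
  · have hG2' : ∫⁻ ω, ENNReal.ofReal (-(Real.log (1 / ψ (X ω)))) ∂P
        = ∫⁻ x, ENNReal.ofReal (-(p x * Real.log (1 / ψ x))) := by
      refine hG2.trans (lintegral_congr fun x => ?_)
      simp only [Pi.neg_apply, mul_neg]
    unfold eInt
    rw [hG1, hG2']
    refine aux_sub _ _ _ _ hFfin hGfin ?_
    have h := lintegral_mono_ae (μ := (volume : Measure ℝ)) (hzero.mono fun x hx =>
      aux_enn _ _ _ _ (hpnn x) (hψnn x) (aux_pt (p x) (ψ x) (hpnn x) (hψnn x) hx))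
    rw [lintegral_add_right _ hpm.ennreal_ofReal, lintegral_add_left hfm.ennreal_ofReal,
      lintegral_add_right _ hψm.ennreal_ofReal, lintegral_add_right _ hgm.ennreal_ofReal,
      hp1, hψ1] at h
    exact (ENNReal.add_le_add_iff_right ENNReal.one_ne_top).1 h
end

section
/- Let Z be a Gaussian random variable with law N(a, σ²), where a ∈ ℝ and σ > 0, and let X be any real random variable. Then the relative entropy D(X‖Z) is finite if and only if X has a density p, E[X²] < +∞, and the entropy h(X) = -∫ p(x) log p(x) dx is finite. -/
open MeasureTheory
open scoped Classical

/-- Relative entropy (Kullback-Leibler divergence) `D(μ‖ν) = ∫ log (dμ/dν) dμ` if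
`μ ≪ ν`, and `+∞` otherwise. -/
noncomputable def klDivE {α : Type*} [MeasurableSpace α] (μ ν : Measure α) : EReal :=
  if μ ≪ ν then eInt μ (fun x => Real.log ((μ.rnDeriv ν x).toReal)) else ⊤

open ProbabilityTheory

lemma aux_eInt {α : Type*} [MeasurableSpace α] (μ : Measure α) (f : α → ℝ) (hf : Measurable f) :
    (eInt μ f ≠ ⊤ ∧ eInt μ f ≠ ⊥) ↔ Integrable f μ := by
  have key : Integrable f μ ↔ (∫⁻ x, ENNReal.ofReal (f x) ∂μ) ≠ ⊤ ∧
      (∫⁻ x, ENNReal.ofReal (-(f x)) ∂μ) ≠ ⊤ := by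
    constructor
    · intro h
      have h2 := hasFiniteIntegral_iff_norm f |>.1 h.2
      constructor
      · refine ne_top_of_le_ne_top h2.ne (lintegral_mono fun x => ENNReal.ofReal_le_ofReal ?_)
        exact le_abs_self _
      · refine ne_top_of_le_ne_top h2.ne (lintegral_mono fun x => ENNReal.ofReal_le_ofReal ?_)
        exact neg_le_abs _
    · rintro ⟨h1, h2⟩
      refine ⟨hf.aestronglyMeasurable, ?_⟩
      rw [hasFiniteIntegral_iff_norm]
      calc ∫⁻ x, ENNReal.ofReal ‖f x‖ ∂μ
          ≤ ∫⁻ x, (ENNReal.ofReal (f x) + ENNReal.ofReal (-(f x))) ∂μ := by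
            refine lintegral_mono fun x => ?_
            rcases abs_cases (f x) with h | h
            · simp only [Real.norm_eq_abs, h.1]; exact le_self_add
            · simp only [Real.norm_eq_abs, h.1]; exact le_add_self
        _ = _ := lintegral_add_left (by fun_prop) _
        _ < ⊤ := ENNReal.add_lt_top.2 ⟨h1.lt_top, h2.lt_top⟩
  rw [key]
  unfold eInt
  generalize (∫⁻ x, ENNReal.ofReal (f x) ∂μ) = A
  generalize (∫⁻ x, ENNReal.ofReal (-(f x)) ∂μ) = B
  induction B with
  | top => simp
  | coe b =>
    induction A with
    | top =>
      simp only [ne_eq, not_true_eq_false, false_and, iff_false, not_and]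
      intro h
      exact absurd (EReal.top_sub_coe (b : ℝ)) h
    | coe a =>
      have : ((((a : NNReal) : ENNReal) : EReal) - (((b : NNReal) : ENNReal) : EReal))
          = (((a : ℝ) - (b : ℝ) : ℝ) : EReal) := by
        rfl
      rw [this]
      simp only [ne_eq, EReal.coe_ne_top, EReal.coe_ne_bot, not_false_eq_true, and_self,
        ENNReal.coe_ne_top]

lemma aux_young (s t : ℝ) (ht : 0 ≤ t) : t * s ≤ t * Real.log t - t + Real.exp s := by
  rcases ht.eq_or_lt with rfl | ht
  · simpa using (Real.exp_pos s).le
  · have h := Real.add_one_le_exp (s - Real.log t)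
    rw [Real.exp_sub, Real.exp_log ht, le_div_iff₀ ht] at h
    nlinarith

lemma aux_log_pdf (a σ : ℝ) (hσ : 0 < σ) (x : ℝ) :
    Real.log (gaussianPDFReal a (Real.toNNReal (σ ^ 2)) x) =
      - Real.log (√(2 * Real.pi * σ ^ 2)) - (x - a) ^ 2 / (2 * σ ^ 2) := by
  have h : ((Real.toNNReal (σ ^ 2) : NNReal) : ℝ) = σ ^ 2 := Real.coe_toNNReal _ (by positivity)
  have h3 : (0:ℝ) < 2 * Real.pi * σ ^ 2 := by positivity
  simp only [gaussianPDFReal, h]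
  rw [Real.log_mul (by positivity) (Real.exp_pos _).ne', Real.log_exp, Real.log_inv]
  ring

lemma aux_v (σ : ℝ) (hσ : 0 < σ) : Real.toNNReal (σ ^ 2) ≠ 0 := by
  have : 0 < σ ^ 2 := by positivity
  simpa using hσ.ne'

/-- chain rule for the log-likelihood ratio -/
lemma aux_chain (μ : Measure ℝ) [IsProbabilityMeasure μ] (a σ : ℝ) (hσ : 0 < σ)
    (hμ : μ ≪ gaussianReal a (Real.toNNReal (σ ^ 2))) :
    ∀ᵐ x ∂μ, Real.log ((μ.rnDeriv (gaussianReal a (Real.toNNReal (σ ^ 2))) x).toReal) =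
      Real.log ((μ.rnDeriv volume x).toReal) + Real.log (√(2 * Real.pi * σ ^ 2))
        + (x - a) ^ 2 / (2 * σ ^ 2) := by
  have hν := gaussianReal_absolutelyContinuous a (aux_v σ hσ)
  have hv := hμ.trans hν
  have h1 := hv.ae_le (Measure.rnDeriv_mul_rnDeriv (κ := volume) hμ)
  have h2 := hv.ae_le (rnDeriv_gaussianReal a (Real.toNNReal (σ ^ 2)))
  have h3 : ∀ᵐ x ∂μ, 0 < (μ.rnDeriv (gaussianReal a (Real.toNNReal (σ ^ 2))) x).toReal := by
    filter_upwards [Measure.rnDeriv_pos hμ, hμ.ae_le (Measure.rnDeriv_lt_top μ _)] with x k1 k2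
    exact ENNReal.toReal_pos k1.ne' k2.ne
  filter_upwards [h1, h2, h3] with x h1 h2 h3
  have h4 := aux_log_pdf a σ hσ x
  have h5 := gaussianPDFReal_pos a (Real.toNNReal (σ ^ 2)) x (aux_v σ hσ)
  rw [← h1, Pi.mul_apply, h2, ENNReal.toReal_mul, toReal_gaussianPDF,
    Real.log_mul h3.ne' h5.ne', h4]
  ring

lemma aux_exp (a σ : ℝ) (hσ : 0 < σ) :
    Integrable (fun x => Real.exp ((x - a) ^ 2 / (4 * σ ^ 2)))
      (gaussianReal a (Real.toNNReal (σ ^ 2))) := by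
  have hν := gaussianReal_absolutelyContinuous a (aux_v σ hσ)
  rw [← integrable_rnDeriv_smul_iff hν]
  have h : ((Real.toNNReal (σ ^ 2) : NNReal) : ℝ) = σ ^ 2 := Real.coe_toNNReal _ (by positivity)
  have h0 : Integrable (fun x : ℝ => Real.exp (-(1 / (4 * σ ^ 2)) * x ^ 2)) :=
    integrable_exp_neg_mul_sq (by positivity)
  have h1 := ((h0.comp_sub_right a).const_mul ((√(2 * Real.pi * σ ^ 2))⁻¹))
  refine h1.congr ?_
  filter_upwards [rnDeriv_gaussianReal a (Real.toNNReal (σ ^ 2))] with x hx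
  rw [hx, toReal_gaussianPDF, smul_eq_mul, gaussianPDFReal, h,
    mul_assoc (√(2 * Real.pi * σ ^ 2))⁻¹, ← Real.exp_add]
  congr 2
  field_simp
  ring

lemma aux_sq_iff (μ : Measure ℝ) [IsProbabilityMeasure μ] (a : ℝ) 
    (h : Integrable (fun x : ℝ => x ^ 2) μ) : Integrable (fun x : ℝ => (x - a) ^ 2) μ := by
  have h2 : MemLp (fun x : ℝ => x) 2 μ := (memLp_two_iff_integrable_sq (by fun_prop)).2 h
  exact (h2.sub (memLp_const a)).integrable_sq

lemma aux_sq_iff2 (μ : Measure ℝ) [IsProbabilityMeasure μ] (a : ℝ) 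
    (h : Integrable (fun x : ℝ => (x - a) ^ 2) μ) : Integrable (fun x : ℝ => x ^ 2) μ := by
  have h2 : MemLp (fun x : ℝ => x - a) 2 μ := (memLp_two_iff_integrable_sq (by fun_prop)).2 h
  simpa using (h2.add (memLp_const a)).integrable_sq

lemma aux_moment (μ : Measure ℝ) [IsProbabilityMeasure μ] (a σ : ℝ) (hσ : 0 < σ)
    (hμ : μ ≪ gaussianReal a (Real.toNNReal (σ ^ 2)))
    (hi : Integrable (fun x =>
      Real.log ((μ.rnDeriv (gaussianReal a (Real.toNNReal (σ ^ 2))) x).toReal)) μ) :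
    Integrable (fun x => (x - a) ^ 2) μ := by
  set ν := gaussianReal a (Real.toNNReal (σ ^ 2)) with hνdef
  have h1 := (integrable_rnDeriv_smul_iff hμ).2 hi
  have h2 : Integrable (fun x => (μ.rnDeriv ν x).toReal) ν := Measure.integrable_toReal_rnDeriv
  have h3 : Integrable (fun x => (x - a) ^ 2 / (4 * σ ^ 2)) μ := by
    rw [← integrable_rnDeriv_smul_iff hμ]
    refine ((h1.sub h2).add (aux_exp a σ hσ)).mono' ?_ ?_
    · have := Measure.measurable_rnDeriv μ ν
      exact Measurable.aestronglyMeasurable (by fun_prop)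
    · refine Filter.Eventually.of_forall fun x => ?_
      rw [Real.norm_of_nonneg (by rw [smul_eq_mul]; positivity)]
      exact aux_young _ _ ENNReal.toReal_nonneg
  have h4 := h3.const_mul (4 * σ ^ 2)
  refine h4.congr (Filter.Eventually.of_forall fun x => ?_)
  simp only
  field_simp

theorem stmt_4
    {Ω : Type*} [MeasurableSpace Ω] (P : Measure Ω) [IsProbabilityMeasure P]
    (X Z : Ω → ℝ) (hX : Measurable X) (hZ : Measurable Z)
    (a σ : ℝ) (hσ : 0 < σ)
    (hZlaw : Measure.map Z P = ProbabilityTheory.gaussianReal a (Real.toNNReal (σ ^ 2))) :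
    (klDivE (Measure.map X P) (Measure.map Z P) ≠ ⊤ ∧
      klDivE (Measure.map X P) (Measure.map Z P) ≠ ⊥) ↔
    ∃ p : ℝ → ℝ, Measurable p ∧ (∀ x, 0 ≤ p x) ∧
      Measure.map X P = volume.withDensity (fun x => ENNReal.ofReal (p x)) ∧
      Integrable (fun ω => (X ω) ^ 2) P ∧
      Integrable (fun x => p x * Real.log (p x)) volume := by
  rw [hZlaw]
  have hsq : Integrable (fun ω => (X ω) ^ 2) P ↔
      Integrable (fun x : ℝ => x ^ 2) (Measure.map X P) := by
    rw [integrable_map_measure (by fun_prop) hX.aemeasurable]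
    rfl
  rw [hsq]
  have hprob : IsProbabilityMeasure (Measure.map X P) :=
    Measure.isProbabilityMeasure_map hX.aemeasurable
  generalize Measure.map X P = μ at *
  have hν := gaussianReal_absolutelyContinuous a (aux_v σ hσ)
  have hν' := gaussianReal_absolutelyContinuous' a (aux_v σ hσ)
  have hmr := Measure.measurable_rnDeriv μ (gaussianReal a (Real.toNNReal (σ ^ 2)))
  have hmv := Measure.measurable_rnDeriv μ volume
  unfold klDivE
  constructor
  · intro h
    by_cases hμ : μ ≪ gaussianReal a (Real.toNNReal (σ ^ 2))
    swap
    · simp [hμ] at h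
    rw [if_pos hμ, aux_eInt _ _ (by fun_prop)] at h
    have hm := aux_moment μ a σ hσ hμ h
    refine ⟨fun x => (μ.rnDeriv volume x).toReal, by fun_prop, fun x => ENNReal.toReal_nonneg,
      ?_, aux_sq_iff2 μ a hm, ?_⟩
    · conv_lhs => rw [← Measure.withDensity_rnDeriv_eq μ volume (hμ.trans hν)]
      refine withDensity_congr_ae ?_
      filter_upwards [Measure.rnDeriv_lt_top μ volume] with x hx
      rw [ENNReal.ofReal_toReal hx.ne]
    · refine (integrable_rnDeriv_smul_iff (hμ.trans hν)
        (f := fun x => Real.log ((μ.rnDeriv volume x).toReal))).2 ?_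
      refine ((h.sub (integrable_const (Real.log (√(2 * Real.pi * σ ^ 2))))).sub
        (hm.div_const (2 * σ ^ 2))).congr ?_
      filter_upwards [aux_chain μ a σ hσ hμ] with x hx
      simp only [Pi.sub_apply, hx]
      ring
  · rintro ⟨p, hp, hp0, hμp, h2, hi⟩
    have hv : μ ≪ volume := by
      rw [hμp]; exact withDensity_absolutelyContinuous _ _
    have hμ := hv.trans hν'
    rw [if_pos hμ, aux_eInt _ _ (by fun_prop)]
    have hpr : μ.rnDeriv volume =ᵐ[volume] fun x => ENNReal.ofReal (p x) := by
      conv_lhs => rw [hμp]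
      exact Measure.rnDeriv_withDensity _ (by fun_prop)
    have hl : Integrable (fun x => Real.log ((μ.rnDeriv volume x).toReal)) μ := by
      rw [← integrable_rnDeriv_smul_iff hv]
      refine hi.congr ?_
      filter_upwards [hpr] with x hx
      rw [hx, ENNReal.toReal_ofReal (hp0 x), smul_eq_mul]
    refine ((hl.add (integrable_const (Real.log (√(2 * Real.pi * σ ^ 2))))).add
      ((aux_sq_iff μ a h2).div_const (2 * σ ^ 2))).congr ?_
    filter_upwards [aux_chain μ a σ hσ hμ] with x hx
    simp only [Pi.add_apply, hx]
end

section
/- Let Z be a real random variable with a continuous density ψ for which there exist α ∈ (0,2) and constants 0 < c₁ ≤ c₂ such that c₁ (1+|x|)^{-(1+α)} ≤ ψ(x) ≤ c₂ (1+|x|)^{-(1+α)} for all x ∈ ℝ (as is the case for any non-extremal, non-normal stable density). Then, for any real random variable X, the relative entropy D(X‖Z) is finite if and only if X has a density p with E[log(1+|X|)] < +∞ and finite entropy h(X) = -∫ p(x) log p(x) dx. -/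
open MeasureTheory
open scoped Classical

lemma eInt_finite_iff {β : Type*} [MeasurableSpace β] (μ : Measure β) (f : β → ℝ)
    (hf : Measurable f) : (eInt μ f ≠ ⊤ ∧ eInt μ f ≠ ⊥) ↔ Integrable f μ := by
  have key : Integrable f μ ↔ (∫⁻ x, ENNReal.ofReal (f x) ∂μ) ≠ ⊤ ∧
      (∫⁻ x, ENNReal.ofReal (-(f x)) ∂μ) ≠ ⊤ := by
    constructor
    · intro h
      exact ⟨h.lintegral_lt_top.ne, h.neg.lintegral_lt_top.ne⟩
    · rintro ⟨h1, h2⟩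
      refine ⟨hf.aestronglyMeasurable, ?_⟩
      rw [hasFiniteIntegral_iff_norm]
      calc ∫⁻ x, ENNReal.ofReal ‖f x‖ ∂μ
          ≤ ∫⁻ x, (ENNReal.ofReal (f x) + ENNReal.ofReal (-(f x))) ∂μ := by
            apply lintegral_mono
            intro x
            rcases le_total 0 (f x) with h | h
            · simp [abs_of_nonneg h]
            · simp [abs_of_nonpos h]
        _ = _ := lintegral_add_left hf.ennreal_ofReal _
        _ < ⊤ := ENNReal.add_lt_top.2 ⟨h1.lt_top, h2.lt_top⟩
  rw [key]
  unfold eInt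
  generalize (∫⁻ x, ENNReal.ofReal (f x) ∂μ) = A
  generalize (∫⁻ x, ENNReal.ofReal (-(f x)) ∂μ) = B
  induction A with
  | top =>
    induction B with
    | top => simp
    | coe b => simp
  | coe a =>
    induction B with
    | top => simp [EReal.sub_top]
    | coe b =>
      have : ((a : ENNReal) : EReal) - ((b : ENNReal) : EReal) = (((a : ℝ) - (b : ℝ) : ℝ) : EReal) := by
        rw [EReal.coe_sub]; rfl
      rw [this]
      simp only [EReal.coe_ne_top, EReal.coe_ne_bot, ne_eq, not_false_eq_true, and_self,
        ENNReal.coe_ne_top]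

lemma klDivE_finite_iff {β : Type*} [MeasurableSpace β] (μ ν : Measure β) :
    (klDivE μ ν ≠ ⊤ ∧ klDivE μ ν ≠ ⊥) ↔
      μ ≪ ν ∧ Integrable (fun x => Real.log ((μ.rnDeriv ν x).toReal)) μ := by
  unfold klDivE
  by_cases h : μ ≪ ν
  · rw [if_pos h, eInt_finite_iff _ _ (by fun_prop)]
    simp [h]
  · simp [h]

lemma young_log (s f : ℝ) (hs : 0 ≤ s) : s * f ≤ s * Real.log s + Real.exp f := by
  rcases hs.eq_or_lt with rfl | hs
  · simp; positivity
  · have h := Real.add_one_le_exp (f - Real.log s)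
    rw [Real.exp_sub, Real.exp_log hs, le_div_iff₀ hs] at h
    nlinarith

lemma integrable_density_log (μ : Measure ℝ) (p : ℝ → ℝ) (hp : Measurable p) (hp0 : ∀ x, 0 ≤ p x)
    (hμ : μ = volume.withDensity (fun x => ENNReal.ofReal (p x))) (f : ℝ → ℝ) :
    Integrable f μ ↔ Integrable (fun x => p x * f x) volume := by
  rw [hμ, integrable_withDensity_iff_integrable_smul' (by fun_prop) (by simp)]
  simp [ENNReal.toReal_ofReal, hp0]

lemma main_law (μ ν : Measure ℝ) [IsProbabilityMeasure μ] [IsProbabilityMeasure ν]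
    (ψ : ℝ → ℝ) (hψc : Continuous ψ)
    (hν : ν = volume.withDensity (fun x => ENNReal.ofReal (ψ x)))
    (α c₁ c₂ : ℝ) (hα0 : 0 < α) (hc₁ : 0 < c₁) (hc₁₂ : c₁ ≤ c₂)
    (hlow : ∀ x : ℝ, c₁ * (1 + |x|) ^ (-(1 + α)) ≤ ψ x)
    (hup : ∀ x : ℝ, ψ x ≤ c₂ * (1 + |x|) ^ (-(1 + α))) :
    (μ ≪ ν ∧ Integrable (fun x => Real.log ((μ.rnDeriv ν x).toReal)) μ) ↔
    ∃ p : ℝ → ℝ, Measurable p ∧ (∀ x, 0 ≤ p x) ∧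
      μ = volume.withDensity (fun x => ENNReal.ofReal (p x)) ∧
      Integrable (fun x : ℝ => Real.log (1 + |x|)) μ ∧
      Integrable (fun x => p x * Real.log (p x)) volume := by
  have hψm : Measurable ψ := hψc.measurable
  have hb : ∀ x : ℝ, 0 < 1 + |x| := fun x => by positivity
  have hψ : ∀ x, 0 < ψ x := fun x => lt_of_lt_of_le (by have := hb x; positivity) (hlow x)
  have hc₂ : 0 < c₂ := hc₁.trans_le hc₁₂
  have hlogψ : Integrable (fun x : ℝ => Real.log (1 + |x|)) μ →
      Integrable (fun x => Real.log (ψ x)) μ := by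
    intro h
    refine Integrable.mono' (((integrable_const (|Real.log c₁| + |Real.log c₂|)).add
      (h.const_mul (1 + α)))) (Measurable.aestronglyMeasurable (by fun_prop)) (ae_of_all _ fun x => ?_)
    have hx := hb x
    have hr : 0 < (1 + |x|) ^ (-(1 + α)) := by positivity
    have h1 := Real.log_le_log (by positivity) (hlow x)
    have h2 := Real.log_le_log (hψ x) (hup x)
    rw [Real.log_mul hc₁.ne' hr.ne', Real.log_rpow hx] at h1
    rw [Real.log_mul hc₂.ne' hr.ne', Real.log_rpow hx] at h2
    have h3 : 0 ≤ Real.log (1 + |x|) := Real.log_nonneg (by linarith [abs_nonneg x])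
    have h4 : 0 ≤ (1 + α) * Real.log (1 + |x|) := by positivity
    have := neg_abs_le (Real.log c₁)
    have := le_abs_self (Real.log c₂)
    have := abs_nonneg (Real.log c₁)
    have := abs_nonneg (Real.log c₂)
    simp only [Pi.add_apply]
    rw [Real.norm_eq_abs, abs_le]
    constructor <;> linarith
  constructor
  · rintro ⟨hac, hint⟩
    set s : ℝ → ℝ := fun x => (μ.rnDeriv ν x).toReal with hs
    have hsm : Measurable s := by fun_prop
    have hs0 : ∀ x, 0 ≤ s x := fun x => ENNReal.toReal_nonneg
    have hpm : Measurable (fun x => ψ x * s x) := by fun_prop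
    have hp0 : ∀ x, 0 ≤ ψ x * s x := fun x => mul_nonneg (hψ x).le (hs0 x)
    have hμ : μ = volume.withDensity (fun x => ENNReal.ofReal (ψ x * s x)) := by
      have e1 : μ = ν.withDensity (fun x => ENNReal.ofReal (s x)) := by
        conv_lhs => rw [← Measure.withDensity_rnDeriv_eq μ ν hac]
        apply withDensity_congr_ae
        filter_upwards [Measure.rnDeriv_lt_top μ ν] with x hx
        exact (ENNReal.ofReal_toReal hx.ne).symm
      conv_lhs => rw [e1, hν]
      rw [← withDensity_mul _ (by fun_prop) (by fun_prop)]
      congr 1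
      ext x
      simp [ENNReal.ofReal_mul (hψ x).le]
    have hg : Integrable (fun x : ℝ => Real.log (1 + |x|)) μ := by
      have h1 : Integrable (fun x => s x * Real.log (s x)) ν :=
        (integrable_rnDeriv_smul_iff hac).2 hint
      have h2 : Integrable (fun x : ℝ => (1 + |x|) ^ (α / 2)) ν := by
        rw [integrable_density_log ν ψ hψm (fun x => (hψ x).le) hν]
        have h3 : Integrable (fun x : ℝ => (1 + ‖x‖) ^ (-(1 + α / 2))) volume :=
          integrable_one_add_norm (by simp; linarith)
        refine Integrable.mono' (h3.const_mul c₂) (by fun_prop) (ae_of_all _ fun x => ?_)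
        have hx := hb x
        have hr : 0 < (1 + |x|) ^ (α / 2) := by positivity
        rw [Real.norm_eq_abs, abs_of_nonneg (mul_nonneg (hψ x).le hr.le), Real.norm_eq_abs]
        calc ψ x * (1 + |x|) ^ (α / 2)
            ≤ c₂ * (1 + |x|) ^ (-(1 + α)) * (1 + |x|) ^ (α / 2) := by
              gcongr; exact hup x
          _ = _ := by
              rw [mul_assoc, ← Real.rpow_add hx]; congr 2; ring
      have h4 : Integrable (fun x => s x * (α / 2 * Real.log (1 + |x|))) ν := by
        refine Integrable.mono' (h1.abs.add h2) (by fun_prop) (ae_of_all _ fun x => ?_)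
        have hx := hb x
        have h3 : 0 ≤ Real.log (1 + |x|) := Real.log_nonneg (by linarith [abs_nonneg x])
        have hsx := hs0 x
        rw [Real.norm_eq_abs, abs_of_nonneg (by positivity)]
        have h5 := young_log (s x) (α / 2 * Real.log (1 + |x|)) hsx
        have h6 : Real.exp (α / 2 * Real.log (1 + |x|)) = (1 + |x|) ^ (α / 2) := by
          rw [Real.rpow_def_of_pos hx, mul_comm]
        rw [h6] at h5
        have := le_abs_self (s x * Real.log (s x))
        simp only [Pi.add_apply]
        linarith
      have h5 : Integrable (fun x : ℝ => α / 2 * Real.log (1 + |x|)) μ :=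
        (integrable_rnDeriv_smul_iff hac).1 h4
      have h6 := h5.const_mul (2 / α)
      refine h6.congr (ae_of_all _ fun x => ?_)
      field_simp
    refine ⟨fun x => ψ x * s x, hpm, hp0, hμ, hg, ?_⟩
    rw [← integrable_density_log μ _ hpm hp0 hμ (fun x => Real.log (ψ x * s x))]
    refine ((hlogψ hg).add hint).congr ?_
    filter_upwards [Measure.rnDeriv_pos hac, hac.ae_le (Measure.rnDeriv_lt_top μ ν)] with x hx1 hx2
    have hx : 0 < s x := ENNReal.toReal_pos hx1.ne' hx2.ne
    simp only [Pi.add_apply]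
    rw [Real.log_mul (hψ x).ne' hx.ne']
  · rintro ⟨p, hpm, hp0, hμ, hg, hent⟩
    rw [← integrable_density_log μ p hpm hp0 hμ (fun x => Real.log (p x))] at hent
    have e1 : μ = ν.withDensity (fun x => ENNReal.ofReal (p x / ψ x)) := by
      conv_lhs => rw [hμ]
      rw [hν, ← withDensity_mul _ (by fun_prop) (by fun_prop)]
      congr 1
      ext x
      simp only [Pi.mul_apply]
      rw [← ENNReal.ofReal_mul (hψ x).le, mul_div_cancel₀ _ (hψ x).ne']
    have hac : μ ≪ ν := by
      rw [e1]; exact withDensity_absolutelyContinuous _ _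
    refine ⟨hac, ?_⟩
    have e2 : μ.rnDeriv ν =ᵐ[ν] fun x => ENNReal.ofReal (p x / ψ x) := by
      conv_lhs => rw [e1]
      exact Measure.rnDeriv_withDensity ν (by fun_prop)
    have e3 : ∀ᵐ x ∂μ, p x ≠ 0 := by
      rw [hμ, ae_withDensity_iff (by fun_prop)]
      exact ae_of_all _ fun x hx h => hx (by simp [h])
    refine (hent.sub (hlogψ hg)).congr ?_
    filter_upwards [hac.ae_le e2, e3] with x hx hx'
    simp only [Pi.sub_apply]
    have hlog : Real.log (p x / ψ x) = Real.log (p x) - Real.log (ψ x) :=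
      Real.log_div hx' (ne_of_gt (hψ x))
    rw [hx, ENNReal.toReal_ofReal (div_nonneg (hp0 x) (hψ x).le), hlog]

/-- **Corollary 2.4.** Let `Z` have a continuous density `ψ` satisfying
`c₁ (1+|x|)^{-(1+α)} ≤ ψ(x) ≤ c₂ (1+|x|)^{-(1+α)}` for some `α ∈ (0,2)` and
`0 < c₁ ≤ c₂` (as for non-extremal, non-normal stable densities). Then for any real
random variable `X`: `D(X‖Z) < ∞` iff `X` has a density `p` with
`E log(1+|X|) < ∞` and finite entropy. -/
theorem stmt_5
    {Ω : Type*} [MeasurableSpace Ω] (P : Measure Ω) [IsProbabilityMeasure P]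
    (X Z : Ω → ℝ) (hX : Measurable X) (hZ : Measurable Z)
    (ψ : ℝ → ℝ) (hψc : Continuous ψ)
    (hZlaw : Measure.map Z P = volume.withDensity (fun x => ENNReal.ofReal (ψ x)))
    (α c₁ c₂ : ℝ) (hα0 : 0 < α) (hα2 : α < 2) (hc₁ : 0 < c₁) (hc₁₂ : c₁ ≤ c₂)
    (hlow : ∀ x : ℝ, c₁ * (1 + |x|) ^ (-(1 + α)) ≤ ψ x)
    (hup : ∀ x : ℝ, ψ x ≤ c₂ * (1 + |x|) ^ (-(1 + α))) :
    (klDivE (Measure.map X P) (Measure.map Z P) ≠ ⊤ ∧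
      klDivE (Measure.map X P) (Measure.map Z P) ≠ ⊥) ↔
    ∃ p : ℝ → ℝ, Measurable p ∧ (∀ x, 0 ≤ p x) ∧
      Measure.map X P = volume.withDensity (fun x => ENNReal.ofReal (p x)) ∧
      Integrable (fun ω => Real.log (1 + |X ω|)) P ∧
      Integrable (fun x => p x * Real.log (p x)) volume := by
  have : IsProbabilityMeasure (Measure.map X P) := Measure.isProbabilityMeasure_map hX.aemeasurable
  have : IsProbabilityMeasure (Measure.map Z P) := Measure.isProbabilityMeasure_map hZ.aemeasurable
  rw [klDivE_finite_iff, main_law _ _ ψ hψc hZlaw α c₁ c₂ hα0 hc₁ hc₁₂ hlow hup]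
  have hg : Integrable (fun x : ℝ => Real.log (1 + |x|)) (Measure.map X P) ↔
      Integrable (fun ω => Real.log (1 + |X ω|)) P :=
    integrable_map_measure (Measurable.aestronglyMeasurable (by fun_prop)) hX.aemeasurable
  simp only [hg]
end

section
/- Let ρ₁, ρ₀, ψ be probability densities on ℝ such that ψ(x) = 0 implies ρ₁(x) = ρ₀(x) = 0 for almost every x, let 0 ≤ b ≤ 1, and set p = (1−b)ρ₁ + bρ₀. Then, as extended real numbers, D(p‖ψ) ≥ (1−b)·D(ρ₁‖ψ) − 2/e, where D(p‖ψ) = ∫ p(x) log(p(x)/ψ(x)) dx. -/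
open MeasureTheory

/-- Relative entropy `D(p‖ψ) = ∫ p log(p/ψ)` of probability densities on `ℝ`. -/
noncomputable def relEntD (p ψ : ℝ → ℝ) : EReal :=
  eInt volume (fun x => p x * Real.log (p x / ψ x))

lemma aux_log (t s : ℝ) (ht : 0 ≤ t) (hs : 0 ≤ s) (h : s = 0 → t = 0) :
    t - s ≤ t * Real.log (t / s) := by
  rcases ht.eq_or_lt with h0 | h0
  · subst h0; simpa using hs
  · have hs' : 0 < s := lt_of_le_of_ne hs (fun e => h0.ne' (h e.symm))
    have := Real.one_sub_inv_le_log_of_pos (div_pos h0 hs')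
    have h2 := mul_le_mul_of_nonneg_left this ht
    have h3 : t * (1 - (t / s)⁻¹) = t - s := by field_simp
    linarith

lemma aux_xlogx (b : ℝ) (hb : 0 ≤ b) : -(1 / Real.exp 1) ≤ b * Real.log b := by
  have := aux_log b (1 / Real.exp 1) hb (by positivity)
    (fun h => absurd h (by positivity))
  rcases hb.eq_or_lt with h0 | h0
  · subst h0; simp; positivity
  · rw [Real.log_div h0.ne' (by positivity), one_div, Real.log_inv, Real.log_exp] at this
    rw [one_div]
    linarith

lemma aux_mono (c t p s : ℝ) (hc : 0 ≤ c) (ht : 0 ≤ t) (hs : 0 < s) (hp : c * t ≤ p) :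
    c * (t * Real.log (t / s)) - (1 / Real.exp 1) * t ≤ c * t * Real.log (p / s) := by
  have h1 := mul_le_mul_of_nonneg_right (aux_xlogx c hc) ht
  rcases hc.eq_or_lt with h0 | h0
  · subst h0; simp; positivity
  rcases ht.eq_or_lt with h0' | h0'
  · subst h0'; simp
  have h2 : Real.log (c * t / s) ≤ Real.log (p / s) :=
    Real.log_le_log (by positivity) (by gcongr)
  have h3 : Real.log (c * t / s) = Real.log c + Real.log (t / s) := by
    rw [mul_div_assoc, Real.log_mul h0.ne' (by positivity)]
  have h4 := mul_le_mul_of_nonneg_left h2 (by positivity : 0 ≤ c * t)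
  rw [h3] at h4
  nlinarith

lemma eInt_of_integrable (f : ℝ → ℝ) (hf : Integrable f volume) :
    eInt volume f = ((∫ x, f x : ℝ) : EReal) := by
  have hp : ∫⁻ x, ENNReal.ofReal (f x) ≠ ⊤ := hf.lintegral_lt_top.ne
  have hn : ∫⁻ x, ENNReal.ofReal (-(f x)) ≠ ⊤ := hf.neg.lintegral_lt_top.ne
  rw [integral_eq_lintegral_pos_part_sub_lintegral_neg_part hf, eInt, EReal.coe_sub,
    EReal.coe_ennreal_toReal hp, EReal.coe_ennreal_toReal hn]

lemma eInt_top (f g : ℝ → ℝ) (hm : Measurable f) (hg : Integrable g volume)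
    (hle : ∀ᵐ x ∂(volume : Measure ℝ), g x ≤ f x) (hf : ¬ Integrable f volume) :
    eInt volume f = ⊤ := by
  have hn : ∫⁻ x, ENNReal.ofReal (-(f x)) ≠ ⊤ := by
    refine ne_top_of_le_ne_top hg.neg.lintegral_lt_top.ne (lintegral_mono_ae ?_)
    filter_upwards [hle] with x hx
    exact ENNReal.ofReal_le_ofReal (by simpa using hx)
  have hp : ∫⁻ x, ENNReal.ofReal (f x) = ⊤ := by
    by_contra hp
    apply hf
    have i1 : Integrable (fun x => max (f x) 0) volume := by
      refine (lintegral_ofReal_ne_top_iff_integrable (by fun_prop)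
        (Filter.Eventually.of_forall fun x => le_max_right _ _)).1 ?_
      simpa [ENNReal.ofReal_max] using hp
    have i2 : Integrable (fun x => max (-f x) 0) volume := by
      refine (lintegral_ofReal_ne_top_iff_integrable (by fun_prop)
        (Filter.Eventually.of_forall fun x => le_max_right _ _)).1 ?_
      simpa [ENNReal.ofReal_max] using hn
    refine (i1.sub i2).congr (Filter.Eventually.of_forall fun x => ?_)
    simp only [Pi.sub_apply]
    rcases le_total 0 (f x) with h | h
    · rw [max_eq_left h, max_eq_right (by linarith)]; ring
    · rw [max_eq_right h, max_eq_left (by linarith)]; ring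
  rw [eInt, hp, ← EReal.coe_ennreal_toReal hn]
  exact EReal.top_sub_coe _

lemma dens (f : ℝ → ℝ) (hm : Measurable f) (hnn : ∀ x, 0 ≤ f x)
    (h : ∫⁻ x, ENNReal.ofReal (f x) = 1) : Integrable f volume ∧ ∫ x, f x = 1 := by
  constructor
  · exact (lintegral_ofReal_ne_top_iff_integrable hm.aestronglyMeasurable
      (Filter.Eventually.of_forall hnn)).1 (by simp [h])
  · rw [integral_eq_lintegral_of_nonneg_ae (Filter.Eventually.of_forall hnn)
      hm.aestronglyMeasurable, h]; simp

/-- For probability densities `ρ₁, ρ₀, ψ` on `ℝ` with `{ψ = 0} ⊆ {ρ₁ = 0} ∩ {ρ₀ = 0}`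
a.e., `b ∈ [0,1]`, and the mixture `p = (1−b)ρ₁ + bρ₀`:
`D(p‖ψ) ≥ (1−b)D(ρ₁‖ψ) − 2/e`. -/
theorem stmt_13
    (ρ₁ ρ₀ ψ : ℝ → ℝ)
    (h1m : Measurable ρ₁) (h1nn : ∀ x, 0 ≤ ρ₁ x) (h11 : ∫⁻ x, ENNReal.ofReal (ρ₁ x) = 1)
    (h0m : Measurable ρ₀) (h0nn : ∀ x, 0 ≤ ρ₀ x) (h01 : ∫⁻ x, ENNReal.ofReal (ρ₀ x) = 1)
    (hψm : Measurable ψ) (hψnn : ∀ x, 0 ≤ ψ x) (hψ1 : ∫⁻ x, ENNReal.ofReal (ψ x) = 1)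
    (hzero : ∀ᵐ x ∂(volume : Measure ℝ), ψ x = 0 → ρ₁ x = 0 ∧ ρ₀ x = 0)
    (b : ℝ) (hb0 : 0 ≤ b) (hb1 : b ≤ 1) :
    relEntD (fun x => (1 - b) * ρ₁ x + b * ρ₀ x) ψ
      ≥ ((1 - b : ℝ) : EReal) * relEntD ρ₁ ψ - ((2 / Real.exp 1 : ℝ) : EReal) := by
  obtain ⟨i1, e1⟩ := dens ρ₁ h1m h1nn h11
  obtain ⟨i0, e0⟩ := dens ρ₀ h0m h0nn h01
  obtain ⟨iψ, eψ⟩ := dens ψ hψm hψnn hψ1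
  have hb' : 0 ≤ 1 - b := by linarith
  set p : ℝ → ℝ := fun x => (1 - b) * ρ₁ x + b * ρ₀ x with hp
  have hpm : Measurable p := by fun_prop
  have ip : Integrable p volume := (i1.const_mul _).add (i0.const_mul _)
  set F : ℝ → ℝ := fun x => p x * Real.log (p x / ψ x) with hF
  set G : ℝ → ℝ := fun x => ρ₁ x * Real.log (ρ₁ x / ψ x) with hG
  have hFm : Measurable F := by fun_prop
  have hGm : Measurable G := by fun_prop
  have hFl : ∀ᵐ x ∂(volume : Measure ℝ), p x - ψ x ≤ F x := by
    filter_upwards [hzero] with x hx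
    refine aux_log _ _ ?_ (hψnn x) ?_
    · have := h1nn x
      have := h0nn x
      simp only [hp]; positivity
    · intro h
      simp [hp, hx h]
  have hGl : ∀ᵐ x ∂(volume : Measure ℝ), ρ₁ x - ψ x ≤ G x := by
    filter_upwards [hzero] with x hx
    exact aux_log _ _ (h1nn x) (hψnn x) (fun h => (hx h).1)
  set g : ℝ → ℝ := fun x => b * (ρ₀ x - ψ x) - (1 / Real.exp 1) * (ρ₁ x + ρ₀ x) with hg
  have ig : Integrable g volume :=
    ((i0.sub iψ).const_mul _).sub ((i1.add i0).const_mul _)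
  have eg : ∫ x, g x = -(2 / Real.exp 1) := by
    have a1 : Integrable (fun x => b * (ρ₀ x - ψ x)) volume := (i0.sub iψ).const_mul _
    have a2 : Integrable (fun x => (1 / Real.exp 1) * (ρ₁ x + ρ₀ x)) volume :=
      (i1.add i0).const_mul _
    simp only [hg]
    rw [integral_sub a1 a2, integral_const_mul, integral_const_mul, integral_sub i0 iψ,
      integral_add i1 i0, e1, e0, eψ]
    ring
  have key : ∀ᵐ x ∂(volume : Measure ℝ), (1 - b) * G x + g x ≤ F x := by
    filter_upwards [hzero] with x hx
    have p1 := h1nn x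
    have p0 := h0nn x
    rcases (hψnn x).eq_or_lt with h | h
    · obtain ⟨q1, q0⟩ := hx h.symm
      simp [hF, hG, hg, hp, q1, q0, ← h]
    · have m1 := aux_mono (1 - b) (ρ₁ x) (p x) (ψ x) hb' p1 h
        (le_add_of_nonneg_right (by positivity))
      have m0 := aux_mono b (ρ₀ x) (p x) (ψ x) hb0 p0 h
        (le_add_of_nonneg_left (by positivity))
      have m2 := mul_le_mul_of_nonneg_left
        (aux_log (ρ₀ x) (ψ x) p0 h.le (fun h' => absurd h' h.ne')) hb0
      have : F x = (1 - b) * ρ₁ x * Real.log (p x / ψ x) + b * ρ₀ x * Real.log (p x / ψ x) := by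
        simp only [hF]
        rw [← add_mul]
      rw [this]
      simp only [hG, hg]
      linarith
  change eInt volume F ≥ ((1 - b : ℝ) : EReal) * eInt volume G - _
  by_cases hFi : Integrable F volume
  swap
  · rw [eInt_top F _ hFm (ip.sub iψ) hFl hFi]
    exact le_top
  have icG : Integrable (fun x => (1 - b) * G x) volume := by
    refine integrable_of_le_of_le (by fun_prop) (f := fun x => (1 - b) * G x)
      (g₁ := fun x => (1 - b) * (ρ₁ x - ψ x)) (g₂ := fun x => F x - g x) ?_ ?_
      ((i1.sub iψ).const_mul _) (hFi.sub ig)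
    · filter_upwards [hGl] with x hx
      exact mul_le_mul_of_nonneg_left hx hb'
    · filter_upwards [key] with x hx
      linarith
  have hint : ∫ x, ((1 - b) * G x + g x) ≤ ∫ x, F x :=
    integral_mono_ae (icG.add ig) hFi key
  rw [integral_add icG ig, integral_const_mul, eg] at hint
  rw [eInt_of_integrable F hFi]
  rcases hb'.eq_or_lt with h | h
  · rw [← h] at hint ⊢
    rw [EReal.coe_zero, zero_mul, zero_sub, ← EReal.coe_neg]
    exact EReal.coe_le_coe_iff.2 (by linarith)
  · have iG : Integrable G volume := by
      refine (icG.const_mul (1 - b)⁻¹).congr (Filter.Eventually.of_forall fun x => ?_)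
      simp only
      field_simp
    rw [eInt_of_integrable G iG, ← EReal.coe_mul, ← EReal.coe_sub]
    exact EReal.coe_le_coe_iff.2 (by linarith)
end

section
/- Let ρ₁ and ρ₀ be probability densities on ℝ with ρ₁(x) ≤ M for almost every x, and with characteristic functions ρ̂₁(t) = ∫ e^{itx} ρ₁(x) dx and ρ̂₀(t) = ∫ e^{itx} ρ₀(x) dx. Suppose there are constants c > 0 and t₀ > 0 such that |ρ̂₁(t)| ≤ e^{-c} and |ρ̂₀(t)| ≤ e^{-c} for all |t| ≥ t₀. Then, for all integers n ≥ k ≥ 2, ∫_{|t| ≥ t₀} |ρ̂₁(t)|^k · |ρ̂₀(t)|^{n−k} dt ≤ 2π M e^{-c(n−2)}. -/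
open MeasureTheory
open scoped Real

/-- The characteristic function (Fourier transform) `ρ̂(t) = ∫ e^{itx} ρ(x) dx` of a
density `ρ` on `ℝ`. -/
noncomputable def chFun (ρ : ℝ → ℝ) (t : ℝ) : ℂ :=
  ∫ x : ℝ, Complex.exp (Complex.I * t * x) * (ρ x : ℂ)

open FourierTransform in
lemma L2_norm_sq_aux (f : Lp (α := ℝ) ℂ 2) : ‖f‖ ^ 2 = ∫ x, ‖f x‖ ^ 2 := by
  have h := inner_self_eq_norm_sq_to_K (𝕜 := ℂ) f
  rw [L2.inner_def] at h
  have h2 : ∀ x, inner ℂ (f x) (f x) = ((‖f x‖ ^ 2 : ℝ) : ℂ) := fun x => by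
    rw [inner_self_eq_norm_sq_to_K]; simp
  simp_rw [h2] at h
  rw [integral_complex_ofReal] at h
  apply Complex.ofReal_injective
  rw [Complex.ofReal_pow]
  exact h.symm

open FourierTransform in
lemma plancherel_aux (g : ℝ → ℂ) (hg : Integrable g) (hg2 : MemLp g 2) :
    Integrable (fun ξ => ‖𝓕 g ξ‖ ^ 2) ∧ ∫ ξ, ‖𝓕 g ξ‖ ^ 2 = ∫ x, ‖g x‖ ^ 2 := by
  set G : Lp (α := ℝ) ℂ 2 := hg2.toLp g with hG
  have hGg : G =ᵐ[volume] g := hg2.coeFn_toLp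
  have hcont : Continuous (𝓕 g) :=
    VectorFourier.fourierIntegral_continuous Real.continuous_fourierChar
      (by exact continuous_inner) hg
  set H : Lp (α := ℝ) ℂ 2 volume := 𝓕 G with hH
  have key : H =ᵐ[volume] 𝓕 g := by
    apply ae_eq_of_integral_contDiff_smul_eq
    · exact (Lp.memLp H).locallyIntegrable (by norm_num)
    · exact hcont.locallyIntegrable
    intro φ hφ hφc
    have hg₁ : HasCompactSupport (Complex.ofRealCLM ∘ φ) := hφc.comp_left rfl
    have hg₂ : ContDiff ℝ (⊤ : ℕ∞) (Complex.ofRealCLM ∘ φ) := by fun_prop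
    let S := hg₁.toSchwartzMap hg₂
    have hS : ∀ x, S x = (φ x : ℂ) := fun x => rfl
    have e := congrArg (fun T => T S) (Lp.fourier_toTemperedDistribution_eq G)
    simp only [TemperedDistribution.fourier_apply, Lp.toTemperedDistribution_apply] at e
    have e2 : ∫ x, (𝓕 S) x • g x = ∫ x, S x • 𝓕 g x :=
      VectorFourier.integral_fourierIntegral_smul_eq_flip (L := innerₗ ℝ)
        Real.continuous_fourierChar continuous_inner S.integrable hg |>.trans (by
          rw [flip_innerₗ]; rfl)
    have e3 : ∫ x, (𝓕 S) x • G x = ∫ x, (𝓕 S) x • g x :=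
      integral_congr_ae (by filter_upwards [hGg] with x hx; rw [hx])
    rw [e3, e2] at e
    simp only [hS, Complex.coe_smul] at e
    exact e.symm
  constructor
  · have := (Lp.memLp H).integrable_norm_pow (by norm_num)
    refine this.congr ?_
    filter_upwards [key] with x hx
    simp [hx]
  · have h1 := L2_norm_sq_aux H
    rw [hH, Lp.norm_fourier_eq, ← hH, L2_norm_sq_aux] at h1
    have h2 : ∫ x, ‖G x‖ ^ 2 = ∫ x, ‖g x‖ ^ 2 :=
      integral_congr_ae (by filter_upwards [hGg] with x hx; simp [hx])
    have h3 : ∫ x, ‖H x‖ ^ 2 = ∫ x, ‖𝓕 g x‖ ^ 2 :=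
      integral_congr_ae (by filter_upwards [key] with x hx; simp [hx])
    rw [← h3, ← h1, h2]

open FourierTransform in
lemma chFun_eq_aux (ρ : ℝ → ℝ) (t : ℝ) :
    chFun ρ t = 𝓕 (fun x => (ρ x : ℂ)) ((-(2 * π)⁻¹) * t) := by
  rw [Real.fourier_real_eq_integral_exp_smul, chFun]
  congr 1
  ext x
  rw [smul_eq_mul]
  congr 2
  push_cast
  have : (π : ℂ) ≠ 0 := by exact_mod_cast Real.pi_ne_zero
  field_simp

open FourierTransform in
theorem stmt_14
    (ρ₁ ρ₀ : ℝ → ℝ) (M : ℝ)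
    (h1m : Measurable ρ₁) (h1nn : ∀ x, 0 ≤ ρ₁ x) (h11 : ∫⁻ x, ENNReal.ofReal (ρ₁ x) = 1)
    (h0m : Measurable ρ₀) (h0nn : ∀ x, 0 ≤ ρ₀ x) (h01 : ∫⁻ x, ENNReal.ofReal (ρ₀ x) = 1)
    (hM : ∀ᵐ x ∂(volume : Measure ℝ), ρ₁ x ≤ M)
    (c t₀ : ℝ) (hc : 0 < c) (ht₀ : 0 < t₀)
    (h1b : ∀ t : ℝ, t₀ ≤ |t| → ‖chFun ρ₁ t‖ ≤ Real.exp (-c))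
    (h0b : ∀ t : ℝ, t₀ ≤ |t| → ‖chFun ρ₀ t‖ ≤ Real.exp (-c)) :
    ∀ n k : ℕ, 2 ≤ k → k ≤ n →
      ∫ t in {t : ℝ | t₀ ≤ |t|}, ‖chFun ρ₁ t‖ ^ k * ‖chFun ρ₀ t‖ ^ (n - k)
        ≤ 2 * π * M * Real.exp (-(c * ((n : ℝ) - 2))) := by
  intro n k hk hkn
  have hint : Integrable ρ₁ := by
    refine ⟨h1m.aestronglyMeasurable, ?_⟩
    rw [hasFiniteIntegral_iff_ofReal (Filter.Eventually.of_forall h1nn), h11]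
    simp
  have hone : ∫ x, ρ₁ x = 1 := by
    rw [integral_eq_lintegral_of_nonneg_ae (Filter.Eventually.of_forall h1nn)
      h1m.aestronglyMeasurable, h11]
    simp
  have hsq : Integrable (fun x => ρ₁ x ^ 2) := by
    refine (hint.const_mul M).mono' (by fun_prop) ?_
    filter_upwards [hM] with x hx
    rw [Real.norm_of_nonneg (by positivity), sq]
    exact mul_le_mul_of_nonneg_right hx (h1nn x)
  have hsqle : ∫ x, ρ₁ x ^ 2 ≤ M := by
    calc ∫ x, ρ₁ x ^ 2 ≤ ∫ x, M * ρ₁ x := by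
          refine integral_mono_ae hsq (hint.const_mul M) ?_
          filter_upwards [hM] with x hx
          rw [sq]
          exact mul_le_mul_of_nonneg_right hx (h1nn x)
      _ = M := by rw [integral_const_mul, hone, mul_one]
  have hL2 : MemLp (fun x => (ρ₁ x : ℂ)) 2 := by
    rw [memLp_two_iff_integrable_sq_norm (by fun_prop)]
    simpa using hsq
  obtain ⟨pi1, pi2⟩ := plancherel_aux (fun x => (ρ₁ x : ℂ)) hint.ofReal hL2
  have hpi : (-(2 * π)⁻¹ : ℝ) ≠ 0 := by simp [Real.pi_ne_zero]
  have hI : Integrable (fun t => ‖chFun ρ₁ t‖ ^ 2) := by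
    simp_rw [chFun_eq_aux]
    exact pi1.comp_mul_left' hpi
  have hle : ∫ t, ‖chFun ρ₁ t‖ ^ 2 ≤ 2 * π * M := by
    simp_rw [chFun_eq_aux]
    rw [Measure.integral_comp_mul_left
      (fun ξ => ‖𝓕 (fun x => (ρ₁ x : ℂ)) ξ‖ ^ 2), pi2, smul_eq_mul]
    have : |(-(2 * π)⁻¹ : ℝ)⁻¹| = 2 * π := by
      rw [inv_neg, inv_inv, abs_neg, abs_of_pos (by positivity)]
    rw [this]
    simp only [Complex.norm_real, Real.norm_eq_abs, sq_abs]
    exact mul_le_mul_of_nonneg_left hsqle (by positivity)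
  have hE : Real.exp (-(c * ((n : ℝ) - 2))) = Real.exp (-c) ^ (k - 2) * Real.exp (-c) ^ (n - k) := by
    rw [← pow_add, ← Real.exp_nat_mul]
    congr 1
    have : k - 2 + (n - k) = n - 2 := by omega
    rw [this, Nat.cast_sub (by omega)]
    push_cast
    ring
  set S := {t : ℝ | t₀ ≤ |t|}
  have hSm : MeasurableSet S := measurableSet_le measurable_const (by fun_prop)
  calc ∫ t in S, ‖chFun ρ₁ t‖ ^ k * ‖chFun ρ₀ t‖ ^ (n - k)
      ≤ ∫ t in S, ‖chFun ρ₁ t‖ ^ 2 * Real.exp (-(c * ((n : ℝ) - 2))) := by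
        refine integral_mono_of_nonneg (Filter.Eventually.of_forall fun t => by positivity)
          (hI.mul_const _).integrableOn ?_
        filter_upwards [ae_restrict_mem hSm] with t ht
        have e : ‖chFun ρ₁ t‖ ^ k = ‖chFun ρ₁ t‖ ^ 2 * ‖chFun ρ₁ t‖ ^ (k - 2) := by
          rw [← pow_add]; congr 1; omega
        rw [hE, e, mul_assoc]
        have := h1b t ht
        have := h0b t ht
        gcongr
    _ ≤ ∫ t, ‖chFun ρ₁ t‖ ^ 2 * Real.exp (-(c * ((n : ℝ) - 2))) :=
        setIntegral_le_integral (hI.mul_const _)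
          (Filter.Eventually.of_forall fun t => by positivity)
    _ ≤ _ := by
        rw [integral_mul_const]
        gcongr
end

section
/- For every ε ∈ (0,1] there is a constant C_ε > 0, depending only on ε, with the following property: for all real random variables X with density p and Z with density ψ such that ψ(x) > 0 for almost every x, the relative entropy satisfies D(X‖Z) ≤ C_ε ∫ |p(x) − ψ(x)|^{1+ε} / ψ(x)^ε dx, as extended real numbers in [0, +∞]. -/
open MeasureTheory

lemma aux_ineq (ε : ℝ) (hε0 : 0 < ε) (hε1 : ε ≤ 1) (t : ℝ) (ht : 0 ≤ t) :
    t * Real.log t ≤ (t - 1) + 4 / ε * |t - 1| ^ (1 + ε) := by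
  have hC : 4 ≤ 4 / ε := by
    rw [le_div_iff₀ hε0]; nlinarith
  have hpow : 0 ≤ |t - 1| ^ (1 + ε) := by positivity
  rcases le_or_gt |t - 1| 1 with h | h
  · have h1 : t * Real.log t ≤ t * (t - 1) := by
      rcases ht.eq_or_lt with h0 | h0
      · simp [← h0]
      · exact mul_le_mul_of_nonneg_left (Real.log_le_sub_one_of_pos h0) ht
    have h2 : |t - 1| ^ (2 : ℝ) ≤ |t - 1| ^ (1 + ε) := by
      rcases (abs_nonneg (t - 1)).eq_or_lt with h0 | h0
      · rw [← h0, Real.zero_rpow (by norm_num), Real.zero_rpow (by linarith)]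
      · exact Real.rpow_le_rpow_of_exponent_ge h0 h (by linarith)
    rw [Real.rpow_two, sq_abs] at h2
    nlinarith
  · have ht2 : 2 < t := by
      rcases lt_abs.1 h with h | h <;> linarith
    have hs : 0 < t - 1 := by linarith
    rw [abs_of_pos hs]
    have h1 : Real.log t ≤ t ^ ε / ε := Real.log_le_rpow_div ht hε0
    have h2 : t ^ ε ≤ 2 * (t - 1) ^ ε := by
      calc t ^ ε ≤ (2 * (t - 1)) ^ ε := Real.rpow_le_rpow ht (by linarith) hε0.le
        _ = 2 ^ ε * (t - 1) ^ ε := Real.mul_rpow (by norm_num) hs.le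
        _ ≤ 2 * (t - 1) ^ ε := by
          gcongr
          calc (2 : ℝ) ^ ε ≤ 2 ^ (1 : ℝ) := Real.rpow_le_rpow_of_exponent_le (by norm_num) hε1
            _ = 2 := Real.rpow_one 2
    have h3 : t * Real.log t ≤ (2 * (t - 1)) * ((2 * (t - 1) ^ ε) / ε) := by
      have : Real.log t ≤ (2 * (t - 1) ^ ε) / ε := h1.trans (by gcongr)
      exact mul_le_mul (by linarith) this (Real.log_nonneg (by linarith)) (by linarith)
    rw [Real.rpow_add hs, Real.rpow_one]
    calc _ ≤ _ := h3
      _ = 4 / ε * ((t - 1) * (t - 1) ^ ε) := by ring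
      _ ≤ _ := by linarith

lemma aux_ineq2 (ε : ℝ) (hε0 : 0 < ε) (hε1 : ε ≤ 1) (p q : ℝ) (hp : 0 ≤ p) (hq : 0 < q) :
    p * Real.log (p / q) ≤ (p - q) + 4 / ε * (|p - q| ^ (1 + ε) / q ^ ε) := by
  have h := mul_le_mul_of_nonneg_left (aux_ineq ε hε0 hε1 (p / q) (by positivity)) hq.le
  have e1 : p / q - 1 = (p - q) / q := by field_simp
  rw [e1, abs_div, abs_of_pos hq, Real.div_rpow (abs_nonneg _) hq.le, Real.rpow_add hq,
    Real.rpow_one] at h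
  have hqe : q ^ ε ≠ 0 := (Real.rpow_pos_of_pos hq ε).ne'
  calc p * Real.log (p / q) = q * (p / q * Real.log (p / q)) := by field_simp
    _ ≤ _ := h
    _ = _ := by field_simp

theorem stmt_15 (ε : ℝ) (hε0 : 0 < ε) (hε1 : ε ≤ 1) :
    ∃ C : ℝ, 0 < C ∧
      ∀ p ψ : ℝ → ℝ,
        Measurable p → (∀ x, 0 ≤ p x) → (∫⁻ x, ENNReal.ofReal (p x)) = 1 →
        Measurable ψ → (∀ x, 0 ≤ ψ x) → (∫⁻ x, ENNReal.ofReal (ψ x)) = 1 →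
        (∀ᵐ x ∂(volume : Measure ℝ), 0 < ψ x) →
        relEntD p ψ ≤ (C : EReal) *
          ((∫⁻ x, ENNReal.ofReal (|p x - ψ x| ^ (1 + ε) / ψ x ^ ε)) : EReal) := by
  have hC : 0 < 4 / ε := by positivity
  refine ⟨4 / ε, hC, fun p ψ hpm hp hp1 hψm hψ hψ1 hpos => ?_⟩
  unfold relEntD eInt
  apply EReal.sub_le_of_le_add
  set f : ℝ → ℝ := fun x => p x * Real.log (p x / ψ x) with hf
  set g : ℝ → ℝ := fun x => |p x - ψ x| ^ (1 + ε) / ψ x ^ ε with hg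
  have hfm : Measurable f := by fun_prop
  have hgm : Measurable g := by fun_prop
  have hcoe : ((4 / ε : ℝ) : EReal) = ((ENNReal.ofReal (4 / ε) : ENNReal) : EReal) := by
    rw [EReal.coe_ennreal_ofReal, max_eq_left hC.le]
  have key : (∫⁻ x, ENNReal.ofReal (f x)) + 1 ≤
      (ENNReal.ofReal (4 / ε) * (∫⁻ x, ENNReal.ofReal (g x)) +
        ∫⁻ x, ENNReal.ofReal (-(f x))) + 1 := by
    rw [← lintegral_const_mul _ (by fun_prop), ← lintegral_add_left (by fun_prop)]
    nth_rw 1 [← hψ1]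
    rw [← hp1, ← lintegral_add_left (by fun_prop), ← lintegral_add_left (by fun_prop)]
    apply lintegral_mono_ae
    filter_upwards [hpos] with x hx
    have h := aux_ineq2 ε hε0 hε1 (p x) (ψ x) (hp x) hx
    have hgn : 0 ≤ g x := by simp only [hg]; positivity
    change f x ≤ p x - ψ x + 4 / ε * g x at h
    have hcg : 0 ≤ 4 / ε * g x := by positivity
    rw [← ENNReal.ofReal_mul hC.le]
    rcases le_total 0 (f x) with h0 | h0
    · rw [ENNReal.ofReal_of_nonpos (by linarith : -f x ≤ 0), add_zero,
        ← ENNReal.ofReal_add h0 hx.le, ← ENNReal.ofReal_add hcg (hp x)]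
      exact ENNReal.ofReal_le_ofReal (by linarith)
    · rw [ENNReal.ofReal_of_nonpos h0, zero_add, ← ENNReal.ofReal_add hcg (by linarith),
        ← ENNReal.ofReal_add (by linarith) (hp x)]
      exact ENNReal.ofReal_le_ofReal (by linarith)
  have key2 := ENNReal.le_of_add_le_add_right ENNReal.one_ne_top key
  rw [hcoe, ← EReal.coe_ennreal_mul, ← EReal.coe_ennreal_add]
  exact EReal.coe_ennreal_le_coe_ennreal_iff.2 key2
end

section
/- For every ε ∈ (0,1] there is a constant C_ε > 0, depending only on ε, with the following property: for all real random variables X with bounded density p and Z with density ψ such that ψ(x) > 0 for almost every x, setting Δ = sup_x |p(x) − ψ(x)|, the relative entropy satisfies D(X‖Z) ≤ C_ε · Δ^ε · ∫ ψ(x)^{-ε} |p(x) − ψ(x)| dx, as extended real numbers in [0, +∞]. -/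
open MeasureTheory

lemma stmt_16_lower (q s : ℝ) (hq : 0 ≤ q) (hs : 0 < s) : q - s ≤ q * Real.log (q / s) := by
  rcases hq.eq_or_lt with rfl | hq
  · simp; linarith
  · have h := Real.one_sub_inv_le_log_of_pos (div_pos hq hs)
    have h2 := mul_le_mul_of_nonneg_left h hq.le
    have h3 : q * (1 - (q / s)⁻¹) = q - s := by field_simp
    linarith

lemma stmt_16_upper (ε : ℝ) (hε0 : 0 < ε) (hε1 : ε ≤ 1) (q s Δ : ℝ) (hq : 0 ≤ q) (hs : 0 < s)
    (hΔ : |q - s| ≤ Δ) :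
    q * Real.log (q / s) - q + s ≤ 4 / ε * Δ ^ ε * (s ^ (-ε) * |q - s|) := by
  set u := |q - s| with hu
  have hu0 : 0 ≤ u := abs_nonneg _
  have h4 : 1 ≤ 4 / ε := by rw [le_div_iff₀ hε0]; linarith
  have hmain : q * Real.log (q / s) - q + s ≤ 4 / ε * (u * (u / s) ^ ε) := by
    have hus : 0 ≤ u / s := by positivity
    have hr : 0 ≤ u * (u / s) ^ ε := by positivity
    rcases le_or_gt u s with h | h
    · have h1 : q * Real.log (q / s) ≤ q * (q / s - 1) := by
        rcases hq.eq_or_lt with rfl | hq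
        · simp
        · exact mul_le_mul_of_nonneg_left (Real.log_le_sub_one_of_pos (by positivity)) hq.le
      have h2 : q * (q / s - 1) - q + s = u * (u / s) := by
        have : u * u = (q - s) * (q - s) := abs_mul_abs_self _
        rw [← mul_div_assoc, this]; field_simp; ring
      have h3 : u / s ≤ (u / s) ^ ε :=
        Real.self_le_rpow_of_le_one hus ((div_le_one hs).2 h) hε1
      have h5 := mul_le_mul_of_nonneg_left h3 hu0
      nlinarith
    · have hqs : s < q - s := by
        rcases le_total 0 (q - s) with h' | h'
        · rwa [hu, abs_of_nonneg h'] at h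
        · rw [hu, abs_of_nonpos h'] at h; linarith
      have hue : u = q - s := by rw [hu, abs_of_nonneg (by linarith)]
      have h1 : Real.log (q / s) ≤ (q / s) ^ ε / ε := Real.log_le_rpow_div (by positivity) hε0
      have h2 : (q / s) ^ ε ≤ 2 * (u / s) ^ ε := by
        calc (q / s) ^ ε ≤ (2 * (u / s)) ^ ε := by
              apply Real.rpow_le_rpow (by positivity) _ hε0.le
              rw [← mul_div_assoc]
              exact div_le_div_of_nonneg_right (by linarith) hs.le
          _ = 2 ^ ε * (u / s) ^ ε := Real.mul_rpow (by norm_num) hus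
          _ ≤ 2 * (u / s) ^ ε := by
              apply mul_le_mul_of_nonneg_right _ (by positivity)
              exact Real.rpow_le_self_of_one_le (by norm_num) hε1
      calc q * Real.log (q / s) - q + s ≤ q * Real.log (q / s) := by linarith
        _ ≤ (2 * u) * (2 * (u / s) ^ ε / ε) := by
            have h6 : Real.log (q / s) ≤ 2 * (u / s) ^ ε / ε :=
              h1.trans (div_le_div_of_nonneg_right h2 hε0.le)
            calc _ ≤ q * (2 * (u / s) ^ ε / ε) := mul_le_mul_of_nonneg_left h6 hq
              _ ≤ _ := mul_le_mul_of_nonneg_right (by linarith) (by positivity)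
        _ = _ := by ring
  refine hmain.trans ?_
  rw [Real.div_rpow hu0 hs.le, Real.rpow_neg hs.le, mul_assoc]
  apply mul_le_mul_of_nonneg_left _ (by linarith)
  have h7 : u ^ ε ≤ Δ ^ ε := Real.rpow_le_rpow hu0 hΔ hε0.le
  calc u * (u ^ ε / s ^ ε) = u ^ ε * ((s ^ ε)⁻¹ * u) := by ring
    _ ≤ _ := mul_le_mul_of_nonneg_right h7 (by positivity)

/-- **Inequality (6.3), second form.** For every `ε ∈ (0,1]` there is `C_ε > 0` such
that for all random variables `X` with bounded density `p` and `Z` with density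
`ψ > 0` a.e., with `Δ = sup_x |p(x) − ψ(x)|`:
`D(X‖Z) ≤ C_ε Δ^ε ∫ ψ^{-ε} |p − ψ|`. -/
theorem stmt_16 (ε : ℝ) (hε0 : 0 < ε) (hε1 : ε ≤ 1) :
    ∃ C : ℝ, 0 < C ∧
      ∀ p ψ : ℝ → ℝ,
        Measurable p → (∀ x, 0 ≤ p x) → (∫⁻ x, ENNReal.ofReal (p x)) = 1 →
        Measurable ψ → (∀ x, 0 ≤ ψ x) → (∫⁻ x, ENNReal.ofReal (ψ x)) = 1 →
        (∀ᵐ x ∂(volume : Measure ℝ), 0 < ψ x) →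
        ∀ M : ℝ, (∀ x, p x ≤ M) →
        ∀ Δ : ℝ, (∀ x, |p x - ψ x| ≤ Δ) →
        relEntD p ψ ≤ (C : EReal) * ((Δ ^ ε : ℝ) : EReal) *
          ((∫⁻ x, ENNReal.ofReal (ψ x ^ (-ε) * |p x - ψ x|)) : EReal) := by
  refine ⟨4 / ε, by positivity, ?_⟩
  intro p ψ hp hp0 hp1 hψ hψ0 hψ1 hψp M hM Δ hΔ
  have hΔ0 : 0 ≤ Δ := (abs_nonneg _).trans (hΔ 0)
  have hΔε : 0 ≤ Δ ^ ε := Real.rpow_nonneg hΔ0 _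
  have hgm : Measurable (fun x => p x * Real.log (p x / ψ x)) :=
    hp.mul (Real.measurable_log.comp (hp.div hψ))
  have hhm : Measurable (fun x => ψ x ^ (-ε) * |p x - ψ x|) := by fun_prop
  have hneg : (∫⁻ x, ENNReal.ofReal (-(p x * Real.log (p x / ψ x)))) ≤ 1 := by
    rw [← hψ1]
    apply lintegral_mono_ae
    filter_upwards [hψp] with x hx
    apply ENNReal.ofReal_le_ofReal
    have := stmt_16_lower (p x) (ψ x) (hp0 x) hx
    have := hp0 x
    linarith
  have hnegt : (∫⁻ x, ENNReal.ofReal (-(p x * Real.log (p x / ψ x)))) ≠ ⊤ :=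
    ne_top_of_le_ne_top ENNReal.one_ne_top hneg
  have key : (∫⁻ x, ENNReal.ofReal (p x * Real.log (p x / ψ x))) + 1 ≤
      (ENNReal.ofReal (4 / ε * Δ ^ ε) * ∫⁻ x, ENNReal.ofReal (ψ x ^ (-ε) * |p x - ψ x|)) +
      (∫⁻ x, ENNReal.ofReal (-(p x * Real.log (p x / ψ x)))) + 1 := by
    nth_rewrite 1 [← hψ1]
    rw [← hp1, ← lintegral_const_mul _ hhm.ennreal_ofReal,
      ← lintegral_add_left hgm.ennreal_ofReal,
      ← lintegral_add_left (hhm.ennreal_ofReal.const_mul _),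
      ← lintegral_add_right _ hp.ennreal_ofReal]
    apply lintegral_mono_ae
    filter_upwards [hψp] with x hx
    have h1 := stmt_16_upper ε hε0 hε1 (p x) (ψ x) Δ (hp0 x) hx (hΔ x)
    have h3 : 0 ≤ ψ x ^ (-ε) * |p x - ψ x| := by positivity
    have h4 : 0 ≤ 4 / ε * Δ ^ ε := by positivity
    rw [← ENNReal.ofReal_mul h4]
    have hpx := hp0 x
    rcases le_total 0 (p x * Real.log (p x / ψ x)) with h | h
    · rw [ENNReal.ofReal_of_nonpos (by linarith : -(p x * Real.log (p x / ψ x)) ≤ 0), add_zero,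
        ← ENNReal.ofReal_add h hx.le, ← ENNReal.ofReal_add (by positivity) hpx]
      exact ENNReal.ofReal_le_ofReal (by linarith)
    · rw [ENNReal.ofReal_of_nonpos h, zero_add, ← ENNReal.ofReal_add (by positivity) (by linarith),
        ← ENNReal.ofReal_add (add_nonneg (by positivity) (by linarith)) hpx]
      exact ENNReal.ofReal_le_ofReal (by linarith)
  have key2 := (ENNReal.add_le_add_iff_right ENNReal.one_ne_top).1 key
  have hC : ((4 / ε : ℝ) : EReal) * ((Δ ^ ε : ℝ) : EReal) =
      ((ENNReal.ofReal (4 / ε * Δ ^ ε) : ENNReal) : EReal) := by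
    rw [EReal.coe_ennreal_ofReal, max_eq_left (by positivity), EReal.coe_mul]
  unfold relEntD eInt
  rw [hC, ← EReal.coe_ennreal_mul]
  apply EReal.sub_le_of_le_add
  rw [← EReal.coe_ennreal_add]
  exact EReal.coe_ennreal_le_coe_ennreal_iff.2 key2
end
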